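/- arXiv:2106.05753 — 4 statements merged into one kernel-verified Lean document; each statement's English description precedes it below -/
import Mathlib

section
/- Let x : [0,∞) → D be a Frank–Wolfe flow trajectory with mixing parameter γ(t) = c/(c+t) for some constant c ≥ 1. Then for every t ≥ 0, f(x(t)) − f* ≤ (c/(c+t))^c · (f(x(0)) − f*). -/
open scoped RealInnerProductSpace

/-!
By convexity the linear minimisation step satisfies `f'(x) (s - x) ≤ f* - f x`, so along the flow
the suboptimality `g t = f (x t) - f*` obeys `g' ≤ -γ g` with `γ t = c / (c + t)`. Since
`(c + t) ^ c` has logarithmic derivative `γ`, it is an integrating factor: `(c + t) ^ c * g t` is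
nonincreasing.
-/

section Convexity

variable {E : Type*} [NormedAddCommGroup E] [NormedSpace ℝ E]
  {S D : Set E} {f : E → ℝ} {f' : E →L[ℝ] ℝ} {x y s : E}

theorem add_apply_sub_le_of_convexOn_of_hasFDerivWithinAt (hf : ConvexOn ℝ S f)
    (hf' : HasFDerivWithinAt f f' S x) (hx : x ∈ S) (hy : y ∈ S) :
    f x + f' (y - x) ≤ f y := by
  let line : ℝ →ᵃ[ℝ] E := AffineMap.lineMap x y
  have line_zero : line 0 = x := AffineMap.lineMap_apply_zero x y
  have line_one : line 1 = y := AffineMap.lineMap_apply_one x y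
  have convexOn_line : ConvexOn ℝ (line ⁻¹' S) (f ∘ line) := hf.comp_affineMap line
  have deriv_line : HasDerivWithinAt (f ∘ line) (f' (y - x)) (line ⁻¹' S) 0 :=
    hf'.comp_hasDerivWithinAt_of_eq 0 AffineMap.hasDerivWithinAt_lineMap
      (Set.mapsTo_preimage line S) line_zero.symm
  have deriv_le_slope : f' (y - x) ≤ slope (f ∘ line) 0 1 :=
    convexOn_line.le_slope_of_hasDerivWithinAt (by simpa [line_zero] using hx)
      (by simpa [line_one] using hy) zero_lt_one deriv_line
  have slope_eq : slope (f ∘ line) 0 1 = f y - f x := by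
    simp [slope_def_field, line_zero, line_one]
  linarith

theorem add_apply_sub_mem_lowerBounds_of_convexOn (hf : ConvexOn ℝ S f)
    (hf' : HasFDerivWithinAt f f' S x) (hx : x ∈ S) (hDS : D ⊆ S) (hs : ∀ y ∈ D, f' s ≤ f' y) :
    f x + f' (s - x) ∈ lowerBounds (f '' D) := by
  rintro _ ⟨y, hy, rfl⟩
  calc f x + f' (s - x) ≤ f x + f' (y - x) := by
        simpa only [map_sub, add_le_add_iff_left, sub_le_sub_iff_right] using hs y hy
    _ ≤ f y := add_apply_sub_le_of_convexOn_of_hasFDerivWithinAt hf hf' hx (hDS hy)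

end Convexity

section IntegratingFactor

theorem antitoneOn_mul_of_hasDerivWithinAt_le_neg_mul {I : Set ℝ} (hI : Convex ℝ I)
    {P γ g g' : ℝ → ℝ} (hP : ∀ t ∈ I, HasDerivWithinAt P (γ t * P t) I t)
    (hP_nonneg : ∀ t ∈ I, 0 ≤ P t) (hg : ∀ t ∈ I, HasDerivWithinAt g (g' t) I t)
    (hg' : ∀ t ∈ I, g' t ≤ -(γ t * g t)) :
    AntitoneOn (fun t ↦ P t * g t) I := by
  have hderiv : ∀ t ∈ I, HasDerivWithinAt (fun t ↦ P t * g t)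
      (γ t * P t * g t + P t * g' t) I t := fun t ht ↦ (hP t ht).mul (hg t ht)
  refine antitoneOn_of_hasDerivWithinAt_nonpos hI
    (fun t ht ↦ (hderiv t ht).continuousWithinAt)
    (fun t ht ↦ (hderiv t (interior_subset ht)).mono interior_subset) fun t ht ↦ ?_
  have htI : t ∈ I := interior_subset ht
  calc γ t * P t * g t + P t * g' t = P t * (γ t * g t + g' t) := by ring
    _ ≤ 0 := mul_nonpos_of_nonneg_of_nonpos (hP_nonneg t htI) (by linarith [hg' t htI])

theorem hasDerivAt_const_add_rpow_eq_div_mul {a p t : ℝ} (h : a + t ≠ 0) :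
    HasDerivAt (fun t ↦ (a + t) ^ p) (p / (a + t) * (a + t) ^ p) t := by
  have deriv_eq : 1 * p * (a + t) ^ (p - 1) = p / (a + t) * (a + t) ^ p := by
    rw [Real.rpow_sub_one h]
    ring
  exact deriv_eq ▸ ((hasDerivAt_id t).const_add a).rpow_const (Or.inl h)

end IntegratingFactor

section Flow

variable {E : Type*} [NormedAddCommGroup E] [NormedSpace ℝ E]
  {S D : Set E} {f : E → ℝ} {f' : ℝ → E →L[ℝ] ℝ} {fstar : ℝ} {x s : ℝ → E}

theorem antitoneOn_mul_sub_of_frankWolfeFlow (hf : ConvexOn ℝ S f) (hDS : D ⊆ S)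
    (hfstar : IsGLB (f '' D) fstar) {I : Set ℝ} (hI : Convex ℝ I) {P γ : ℝ → ℝ}
    (hγ : ∀ t ∈ I, 0 ≤ γ t) (hP : ∀ t ∈ I, HasDerivWithinAt P (γ t * P t) I t)
    (hP_nonneg : ∀ t ∈ I, 0 ≤ P t) (hxS : Set.MapsTo x I S)
    (hf' : ∀ t ∈ I, HasFDerivWithinAt f (f' t) S (x t))
    (hlmo : ∀ t ∈ I, ∀ y ∈ D, f' t (s t) ≤ f' t y)
    (hode : ∀ t ∈ I, HasDerivWithinAt x (γ t • (s t - x t)) I t) :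
    AntitoneOn (fun t ↦ P t * (f (x t) - fstar)) I := by
  refine antitoneOn_mul_of_hasDerivWithinAt_le_neg_mul hI hP hP_nonneg
    (fun t ht ↦ ((hf' t ht).comp_hasDerivWithinAt t (hode t ht) hxS).sub_const fstar)
    fun t ht ↦ ?_
  have gap_bound : f (x t) + f' t (s t - x t) ≤ fstar :=
    hfstar.2 <| add_apply_sub_mem_lowerBounds_of_convexOn hf (hf' t ht) (hxS ht) hDS
      (hlmo t ht)
  calc f' t (γ t • (s t - x t)) = γ t * f' t (s t - x t) := by rw [map_smul, smul_eq_mul]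
    _ ≤ γ t * -(f (x t) - fstar) := mul_le_mul_of_nonneg_left (by linarith) (hγ t ht)
    _ = -(γ t * (f (x t) - fstar)) := mul_neg _ _

theorem fw_flow_rate_general (hf : ConvexOn ℝ S f) (hDS : D ⊆ S)
    (hfstar : IsGLB (f '' D) fstar) {c : ℝ} (hc : 0 < c)
    (hxS : ∀ t, 0 ≤ t → x t ∈ S)
    (hf' : ∀ t, 0 ≤ t → HasFDerivWithinAt f (f' t) S (x t))
    (hlmo : ∀ t, 0 ≤ t → ∀ y ∈ D, f' t (s t) ≤ f' t y)
    (hode : ∀ t, 0 ≤ t → HasDerivWithinAt x ((c / (c + t)) • (s t - x t)) (Set.Ici 0) t)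
    {t : ℝ} (ht : 0 ≤ t) :
    f (x t) - fstar ≤ (c / (c + t)) ^ c * (f (x 0) - fstar) := by
  have pos : ∀ t ∈ Set.Ici (0 : ℝ), 0 < c + t := fun t ht ↦ add_pos_of_pos_of_nonneg hc ht
  have anti : AntitoneOn (fun t ↦ (c + t) ^ c * (f (x t) - fstar)) (Set.Ici 0) :=
    antitoneOn_mul_sub_of_frankWolfeFlow hf hDS hfstar (convex_Ici 0)
      (fun t ht ↦ (div_pos hc (pos t ht)).le)
      (fun t ht ↦ (hasDerivAt_const_add_rpow_eq_div_mul (pos t ht).ne').hasDerivWithinAt)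
      (fun t ht ↦ Real.rpow_nonneg (pos t ht).le c) hxS hf' hlmo hode
  have weighted : (c + t) ^ c * (f (x t) - fstar) ≤ c ^ c * (f (x 0) - fstar) := by
    simpa only [add_zero] using anti Set.self_mem_Ici ht ht
  rw [Real.div_rpow hc.le (pos t ht).le, div_mul_eq_mul_div,
    le_div_iff₀' (Real.rpow_pos_of_pos (pos t ht) c)]
  exact weighted

end Flow

/-- Continuous-time Frank–Wolfe flow rate: if `x` is a Frank–Wolfe flow
trajectory with mixing parameter `γ(t) = c/(c+t)`, `c ≥ 1`, then
`f(x(t)) − f* ≤ (c/(c+t))^c · (f(x(0)) − f*)` for all `t ≥ 0`. -/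
theorem fw_flow_rate
    {E : Type*} [NormedAddCommGroup E] [InnerProductSpace ℝ E] [FiniteDimensional ℝ E]
    (D : Set E) (hDcp : IsCompact D) (hDcv : Convex ℝ D) (hDne : D.Nonempty)
    (f : E → ℝ) (hconv : ConvexOn ℝ Set.univ f) (hdiff : Differentiable ℝ f)
    (fstar : ℝ) (hfstar : IsLeast (f '' D) fstar)
    (c : ℝ) (hc : 1 ≤ c)
    (x s : ℝ → E)
    (hxD : ∀ t : ℝ, 0 ≤ t → x t ∈ D)
    (hsD : ∀ t : ℝ, 0 ≤ t → s t ∈ D)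
    (hlmo : ∀ t : ℝ, 0 ≤ t → ∀ y ∈ D,
      ⟪gradient f (x t), s t⟫ ≤ ⟪gradient f (x t), y⟫)
    (hode : ∀ t : ℝ, 0 ≤ t →
      HasDerivWithinAt x ((c / (c + t)) • (s t - x t)) (Set.Ici 0) t) :
    ∀ t : ℝ, 0 ≤ t →
      f (x t) - fstar ≤ (c / (c + t)) ^ c * (f (x 0) - fstar) := by
  intro t ht
  exact fw_flow_rate_general (f' := fun t ↦ fderiv ℝ f (x t)) hconv (Set.subset_univ D) hfstar.isGLB
    (by linarith) (fun t _ ↦ Set.mem_univ (x t))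
    (fun t _ ↦ (hdiff (x t)).hasFDerivAt.hasFDerivWithinAt)
    (by simpa only [inner_gradient_left] using hlmo) hode ht
end

section
/- Let c > 1, D₄ ≥ 0, and let h : ℕ → ℝ be a nonnegative sequence satisfying h_{k+1} ≤ (1 − c/(c+k+1)) · h_k + D₄ · (c/(c+k+1))² for all k ≥ 0. Let H = max{h_0, D₄c²/(c−1)}. Then h_k ≤ H/(k+1) for all k ≥ 0. -/
/-!
Since `1 - c / (c + k + 1) = (k + 1) / (c + k + 1) ≥ 0`, the right-hand side of the recursion is
monotone in `h k`, so it suffices that `H / (k + 1)` is a supersolution. Substituting it, and using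
`D * c ^ 2 ≤ H * (c - 1)`, reduces the supersolution inequality to
`H * (2 * c + k) / (c + k + 1) ^ 2 ≤ H / (k + 2)`. As `H ≥ 0`, this is AM-GM: `c + k + 1` is the
mean of `2 * c + k` and `k + 2`.
-/

theorem seq_le_seq_of_monotone {α : Type*} [Preorder α] {f : ℕ → α → α}
    (hf : ∀ k, Monotone (f k)) {x y : ℕ → α} (h₀ : x 0 ≤ y 0)
    (hx : ∀ k, x (k + 1) ≤ f k (x k)) (hy : ∀ k, f k (y k) ≤ y (k + 1)) (k : ℕ) :
    x k ≤ y k := by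
  induction k with
  | zero => exact h₀
  | succ k ih => exact (hx k).trans ((hf k ih).trans (hy k))

section Field

variable {𝕜 : Type*} [Field 𝕜] [LinearOrder 𝕜] [IsStrictOrderedRing 𝕜]

theorem two_mul_add_div_sq_le_inv {c t : 𝕜} (ht : 0 < t + 2) (hct : c + t + 1 ≠ 0) :
    (2 * c + t) / (c + t + 1) ^ 2 ≤ (t + 2)⁻¹ := by
  rw [div_le_iff₀ (by positivity), inv_mul_eq_div, le_div_iff₀ ht]
  linarith [four_mul_le_sq_add (2 * c + t) (t + 2)]

theorem one_sub_div_mul_div_add_le_div {c D H t : 𝕜} (ht : -1 < t) (hct : c + t + 1 ≠ 0)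
    (hH : 0 ≤ H) (hD : D * c ^ 2 ≤ H * (c - 1)) :
    (1 - c / (c + t + 1)) * (H / (t + 1)) + D * (c / (c + t + 1)) ^ 2 ≤ H / (t + 2) := by
  have ht₁ : t + 1 ≠ 0 := by linarith
  calc (1 - c / (c + t + 1)) * (H / (t + 1)) + D * (c / (c + t + 1)) ^ 2
      = (H * (c + t + 1) + D * c ^ 2) / (c + t + 1) ^ 2 := by field_simp; ring
    _ ≤ (H * (c + t + 1) + H * (c - 1)) / (c + t + 1) ^ 2 := by gcongr
    _ = H * ((2 * c + t) / (c + t + 1) ^ 2) := by ring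
    _ ≤ H * (t + 2)⁻¹ := by gcongr; exact two_mul_add_div_sq_le_inv (by linarith) hct
    _ = H / (t + 2) := (div_eq_mul_inv H (t + 2)).symm

theorem rk_recursive_rate_general {c D H : 𝕜} (hc : -1 < c) (hH : 0 ≤ H)
    (hD : D * c ^ 2 ≤ H * (c - 1)) {h : ℕ → 𝕜} (h₀ : h 0 ≤ H)
    (hrec : ∀ k : ℕ,
      h (k + 1) ≤ (1 - c / (c + k + 1)) * h k + D * (c / (c + k + 1)) ^ 2) (k : ℕ) :
    h k ≤ H / (k + 1) := by
  have hpos (j : ℕ) : 0 < c + j + 1 := by linarith [j.cast_nonneg (α := 𝕜)]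
  have hcoeff (j : ℕ) : 0 ≤ 1 - c / (c + j + 1) := by
    rw [sub_nonneg, div_le_one (hpos j)]
    linarith [j.cast_nonneg (α := 𝕜)]
  refine seq_le_seq_of_monotone (y := fun j ↦ H / (j + 1))
    (fun j ↦ (monotone_mul_left_of_nonneg (hcoeff j)).add_const _) (by simpa using h₀) hrec
    (fun j ↦ ?_) k
  have hj : (-1 : 𝕜) < j := by linarith [j.cast_nonneg (α := 𝕜)]
  simpa [add_assoc, one_add_one_eq_two] using one_sub_div_mul_div_add_le_div hj (hpos j).ne' hH hD

end Field

/-- Recursive rate lemma: if `h` is nonnegative and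
`h_{k+1} ≤ (1 − c/(c+k+1)) h_k + D₄ (c/(c+k+1))²` with `c > 1`, `D₄ ≥ 0`, then
`h_k ≤ H/(k+1)` where `H = max{h_0, D₄ c²/(c−1)}`. -/
theorem rk_recursive_rate
    (c D₄ : ℝ) (hc : 1 < c) (hD₄ : 0 ≤ D₄)
    (h : ℕ → ℝ) (hnn : ∀ k : ℕ, 0 ≤ h k)
    (hrec : ∀ k : ℕ,
      h (k + 1) ≤ (1 - c / (c + k + 1)) * h k + D₄ * (c / (c + k + 1)) ^ 2) :
    ∀ k : ℕ, h k ≤ max (h 0) (D₄ * c ^ 2 / (c - 1)) / (k + 1) :=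
  rk_recursive_rate_general (by linarith) ((hnn 0).trans (le_max_left _ _))
    ((div_le_iff₀ (sub_pos.2 hc)).1 (le_max_right _ _)) (le_max_left _ _) hrec
end

section
/- Let x : ℕ → ℝ satisfy x_1 = 1 and x_{k+1} = |x_k − c_k/k| for all k ≥ 1, where c : ℕ → ℝ is a sequence of nonnegative reals such that for some constant C₁ > 0, for every k there exists k' > k with c_{k'} > C₁. Then for every K there exists k ≥ K with |x_k| ≥ C₁/(2k); that is, the smallest upper bound of |x_k| is at least of order 1/k. -/
/-!
By the triangle inequality, a step of size at least `2 * r` cannot have both endpoints in the open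
ball of radius `r` about `0`. So each index `k` with `C₁ < c k` makes `|x k|` or `|x (k + 1)|` at
least half of `C₁ / k`, and this bound only weakens from `k` to `k + 1`.
-/

open Filter

theorem le_norm_or_le_norm_sub_of_two_mul_le_norm {E : Type*} [SeminormedAddGroup E]
    {u v : E} {r : ℝ} (hv : 2 * r ≤ ‖v‖) : r ≤ ‖u‖ ∨ r ≤ ‖u - v‖ := by
  have htri : ‖v‖ ≤ ‖u‖ + ‖u - v‖ := norm_le_norm_add_norm_sub u v
  by_contra! hlt
  linarith

theorem frequently_le_norm_of_frequently_two_mul_le_norm {E : Type*} [SeminormedAddGroup E]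
    {x y : ℕ → E} {r : ℕ → ℝ} (hr : ∀ᶠ k in atTop, r (k + 1) ≤ r k)
    (hx : ∀ᶠ k in atTop, ‖x k - y k‖ ≤ ‖x (k + 1)‖) (hy : ∃ᶠ k in atTop, 2 * r k ≤ ‖y k‖) :
    ∃ᶠ k in atTop, r k ≤ ‖x k‖ := by
  have hor : ∃ᶠ k in atTop, r k ≤ ‖x k‖ ∨ r (k + 1) ≤ ‖x (k + 1)‖ := by
    refine (hy.and_eventually (hr.and hx)).mono fun k ⟨hyk, hrk, hxk⟩ => ?_
    exact (le_norm_or_le_norm_sub_of_two_mul_le_norm hyk).imp_right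
      fun hk => hrk.trans (hk.trans hxk)
  rcases frequently_or_distrib.1 hor with h | h
  · exact h
  · exact (tendsto_add_atTop_nat 1).frequently h

theorem toy_recursion_lower_bound_general {E : Type*} [SeminormedAddCommGroup E] [NormedSpace ℝ E]
    {x c : ℕ → E} {C : ℝ} (hC : 0 ≤ C)
    (hx : ∀ᶠ k : ℕ in atTop, ‖x k - (k : ℝ)⁻¹ • c k‖ ≤ ‖x (k + 1)‖)
    (hc : ∃ᶠ k in atTop, C ≤ ‖c k‖) :
    ∃ᶠ k : ℕ in atTop, C / (2 * k) ≤ ‖x k‖ := by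
  refine frequently_le_norm_of_frequently_two_mul_le_norm ?_ hx (hc.mono fun k hk => ?_)
  · filter_upwards [eventually_gt_atTop 0] with k hk
    gcongr
    exact k.le_succ
  · calc 2 * (C / (2 * k)) = (k : ℝ)⁻¹ * C := by ring
      _ ≤ (k : ℝ)⁻¹ * ‖c k‖ := by gcongr
      _ = ‖(k : ℝ)⁻¹ • c k‖ := by rw [norm_smul, norm_inv, RCLike.norm_natCast]

/-- `O(1/k)` lower-bound lemma: if `x_1 = 1`, `x_{k+1} = |x_k − c_k/k|`
for `k ≥ 1` with `c_k ≥ 0`, and the `c_k` exceed some `C₁ > 0` infinitely often, then for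
every `K` there is `k ≥ K` with `|x_k| ≥ C₁/(2k)`. -/
theorem toy_recursion_lower_bound
    (x c : ℕ → ℝ) (hx1 : x 1 = 1)
    (hrec : ∀ k : ℕ, 1 ≤ k → x (k + 1) = |x k - c k / k|)
    (hcnn : ∀ k : ℕ, 0 ≤ c k)
    (C₁ : ℝ) (hC₁ : 0 < C₁)
    (hfreq : ∀ k : ℕ, ∃ k' : ℕ, k < k' ∧ C₁ < c k') :
    ∀ K : ℕ, ∃ k : ℕ, K ≤ k ∧ C₁ / (2 * k) ≤ |x k| :=
  frequently_atTop.1 <| toy_recursion_lower_bound_general (x := x) (c := c) hC₁.le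
    (eventually_atTop.2 ⟨1, fun k hk => by simp [hrec k hk, div_eq_inv_mul]⟩)
    ((frequently_atTop'.2 hfreq).mono fun k hk => hk.le.trans (le_abs_self (c k)))
end

section
/- Consider the scalar toy Runge–Kutta Frank–Wolfe iteration with x^{(0)} = 1, and suppose 0 < q·(P^{(k)}β)_i < 1 for every i and every k ≥ 1. Then there exist a constant C₂ > 0 and an index k̃ such that |x^{(k)}| ≤ C₂/k for all k ≥ k̃. -/
open Matrix

/-!
Eliminating the stages turns a step into `x' = x + ∑ i, p i * (-sign (xbar i) - x)` with `p = P β`.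
As `k Γ → c`, also `k p → c β`, so the total weight `S = ∑ i, p i` is of exact order `1 / k`.
The stage values lie within `O(1 / k) (1 + |x|)` of `x`. Hence either `|x| = O(1 / k)`, and then
`|x'| = O(1 / k)` as well, or all stages have the sign of `x`. In the second case
`|x'| = ||x| - S (1 + |x|)|`, so `|x|` decreases by at least `S` unless `0` is overshot, and then
`|x'| ≤ S`. Since `∑ 1 / k` diverges, `|x|` must fall below a fixed multiple of `1 / k`; it stays
there because a decrease by `S` outpaces the decrease of that bound.
-/

open Filter Topology

section Recurrences

theorem eventually_nonpos_of_le_max_zero_sub {w δ : ℕ → ℝ} (hδ : ∀ k, 0 ≤ δ k)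
    (hsum : ¬Summable δ) (hw : ∀ᶠ k in atTop, w (k + 1) ≤ max 0 (w k - δ k)) :
    ∀ᶠ k in atTop, w k ≤ 0 := by
  obtain ⟨K, hK⟩ := eventually_atTop.1 hw
  set T : ℕ → ℝ := fun n ↦ ∑ i ∈ Finset.range n, δ i
  have hT : Tendsto T atTop atTop := (not_summable_iff_tendsto_nat_atTop_of_nonneg hδ).1 hsum
  have hle : ∀ n, K ≤ n → w n ≤ max 0 (w K - (T n - T K)) := by
    intro n hn
    induction n, hn using Nat.le_induction with
    | base => simp
    | succ n hn ih =>
      have hTn : T (n + 1) = T n + δ n := Finset.sum_range_succ δ n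
      have hδn : 0 ≤ δ n := hδ n
      calc w (n + 1) ≤ max 0 (w n - δ n) := hK n hn
        _ ≤ max 0 (w K - (T (n + 1) - T K)) := by grind
  filter_upwards [eventually_ge_atTop K, hT.eventually_ge_atTop (w K + T K)] with n hn hTn
  exact (hle n hn).trans (max_le le_rfl (by linarith))

theorem eventually_le_two_mul_div_of_le_max {y : ℕ → ℝ} {C a : ℝ} (hC : 0 < C) (ha : 0 < a)
    (hy : ∀ᶠ k : ℕ in atTop, y (k + 1) ≤ max (C / k) (y k - a / k)) :
    ∀ᶠ k : ℕ in atTop, y k ≤ 2 * C / k := by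
  have hsum : ¬Summable fun k : ℕ ↦ a / 2 / (k : ℝ) := by
    simpa only [div_eq_mul_inv _ (_ : ℝ), summable_mul_left_iff (by positivity : a * 2⁻¹ ≠ 0)]
      using Real.not_summable_natCast_inv
  suffices h : ∀ᶠ k : ℕ in atTop, y k - 2 * C / k ≤ 0 by
    simpa only [sub_nonpos] using h
  refine eventually_nonpos_of_le_max_zero_sub (fun k ↦ by positivity) hsum ?_
  filter_upwards [hy, eventually_ge_atTop 1,
    tendsto_natCast_atTop_atTop.eventually_ge_atTop (4 * C / a)] with k hyk hk hCk
  have hk1 : (1 : ℝ) ≤ k := by exact_mod_cast hk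
  have hk0 : (0 : ℝ) < k := by linarith
  have hCk' : 4 * C ≤ k * a := (div_le_iff₀ ha).1 hCk
  have hreset : C / k ≤ 2 * C / (k + 1) := by
    rw [div_le_div_iff₀ hk0 (by positivity)]
    nlinarith
  have hbarrier : 2 * C / k - 2 * C / (k + 1) ≤ a / 2 / k := by
    rw [div_sub_div _ _ hk0.ne' (by positivity), div_le_div_iff₀ (by positivity) hk0]
    nlinarith [mul_pos hk0 hk0, mul_pos hk0 ha]
  have hhalves : a / k = a / 2 / k + a / 2 / k := by ring
  push_cast
  rcases le_max_iff.1 hyk with hyk | hyk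
  · exact le_max_of_le_left (by linarith)
  · exact le_max_of_le_right (by linarith)

end Recurrences

theorem tendsto_zero_of_tendsto_natCast_smul {E : Type*} [AddCommGroup E] [Module ℝ E]
    [TopologicalSpace E] [ContinuousSMul ℝ E] {f : ℕ → E} {c : E}
    (h : Tendsto (fun k : ℕ ↦ (k : ℝ) • f k) atTop (𝓝 c)) : Tendsto f atTop (𝓝 0) := by
  have hlim := (tendsto_inv_atTop_nhds_zero_nat (𝕜 := ℝ)).smul h
  rw [zero_smul] at hlim
  refine hlim.congr' ?_
  filter_upwards [eventually_ne_atTop 0] with k hk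
  exact inv_smul_smul₀ (Nat.cast_ne_zero.2 hk) (f k)

section SignStep

theorem abs_realSign_le_one (u : ℝ) : |u.sign| ≤ 1 := by
  rcases u.sign_apply_eq with h | h | h <;> simp [h]

theorem realSign_eq_of_abs_sub_lt {u x : ℝ} (h : |u - x| < |x|) : u.sign = x.sign := by
  rcases lt_trichotomy x 0 with hx | rfl | hx
  · rw [abs_of_neg hx, abs_lt] at h
    rw [Real.sign_of_neg hx, Real.sign_of_neg (by linarith)]
  · exact absurd h (by simp)
  · rw [abs_of_pos hx, abs_lt] at h
    rw [Real.sign_of_pos hx, Real.sign_of_pos (by linarith)]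

theorem abs_add_mul_neg_sign_sub_self_le {x S : ℝ} (hS0 : 0 ≤ S) (hS1 : S ≤ 1) :
    |x + S * (-x.sign - x)| ≤ max S (|x| - S) := by
  rcases lt_trichotomy x 0 with hx | rfl | hx
  · rw [Real.sign_of_neg hx, abs_of_neg hx, le_max_iff]
    rcases abs_cases (x + S * (- -1 - x)) with ⟨h, -⟩ | ⟨h, -⟩ <;> rw [h]
    · left; nlinarith
    · right; nlinarith
  · simp [hS0]
  · rw [Real.sign_of_pos hx, abs_of_pos hx, le_max_iff]
    rcases abs_cases (x + S * (-1 - x)) with ⟨h, -⟩ | ⟨h, -⟩ <;> rw [h]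
    · right; nlinarith
    · left; nlinarith

variable {ι : Type*} [Fintype ι] {p u : ι → ℝ} {x : ℝ}

theorem abs_add_dotProduct_neg_sign_sub_le (hp : ∀ i, 0 ≤ p i) (hp1 : ∑ i, p i ≤ 1) :
    |x + p ⬝ᵥ (fun i ↦ -(u i).sign - x)| ≤ |x| + ∑ i, p i := by
  have hsplit : x + p ⬝ᵥ (fun i ↦ -(u i).sign - x) =
      (1 - ∑ i, p i) * x - ∑ i, p i * (u i).sign := by
    simp only [dotProduct, mul_sub, mul_neg, Finset.sum_sub_distrib, Finset.sum_neg_distrib,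
      ← Finset.sum_mul]
    ring
  have hsign : |∑ i, p i * (u i).sign| ≤ ∑ i, p i :=
    (Finset.abs_sum_le_sum_abs _ _).trans <| Finset.sum_le_sum fun i _ ↦ by
      rw [abs_mul, abs_of_nonneg (hp i)]
      exact mul_le_of_le_one_right (hp i) (abs_realSign_le_one _)
  have hshrink : |(1 - ∑ i, p i) * x| ≤ |x| := by
    rw [abs_mul, abs_of_nonneg (sub_nonneg.2 hp1)]
    exact mul_le_of_le_one_left (abs_nonneg x)
      (sub_le_self 1 (Finset.sum_nonneg fun i _ ↦ hp i))
  rw [hsplit]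
  exact (abs_sub _ _).trans (add_le_add hshrink hsign)

theorem abs_add_dotProduct_neg_sign_sub_le_max {d : ℝ} (hp : ∀ i, 0 ≤ p i)
    (hp1 : ∑ i, p i ≤ 1) (hd0 : 0 ≤ d) (hd : d ≤ 1 / 2) (hu : ∀ i, |u i - x| ≤ d * (1 + |x|)) :
    |x + p ⬝ᵥ (fun i ↦ -(u i).sign - x)| ≤ max (2 * d + ∑ i, p i) (|x| - ∑ i, p i) := by
  rcases le_or_gt |x| (2 * d) with hnear | hfar
  · exact le_max_of_le_left <|
      (abs_add_dotProduct_neg_sign_sub_le hp hp1).trans (by linarith)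
  · have hsign (i : ι) : (u i).sign = x.sign :=
      realSign_eq_of_abs_sub_lt <| (hu i).trans_lt (by nlinarith [abs_nonneg x])
    have hsum : p ⬝ᵥ (fun i ↦ -(u i).sign - x) = (∑ i, p i) * (-x.sign - x) := by
      simp only [dotProduct, hsign, Finset.sum_mul]
    rw [hsum]
    exact (abs_add_mul_neg_sign_sub_self_le (Finset.sum_nonneg fun i _ ↦ hp i) hp1).trans
      (max_le_max_right _ (by linarith))

end SignStep

theorem tendsto_natCast_smul_div_add_natCast_add {ι : Type*} (c : ℝ) (ω : ι → ℝ) :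
    Tendsto (fun k : ℕ ↦ (k : ℝ) • fun i ↦ c / (c + k + ω i)) atTop (𝓝 fun _ ↦ c) := by
  refine tendsto_pi_nhds.2 fun i ↦ ?_
  have h := (tendsto_natCast_div_add_atTop (𝕜 := ℝ) (c + ω i)).const_mul c
  rw [mul_one] at h
  refine h.congr fun k ↦ ?_
  simp only [Pi.smul_apply, smul_eq_mul]
  ring

section StageWeights

variable {ι R : Type*} [Fintype ι] [DecidableEq ι] [CommRing R]

/-- The vector `P β = Γ (1 + Aᵀ Γ)⁻¹ β`, with `Γ = diagonal γ`, for a Runge–Kutta step with stage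
coefficients `A`, step weights `β` and step sizes `γ`: the weights of the stage directions once the
implicit dependence between the stages is eliminated. If `1 + Aᵀ Γ` is not invertible, its inverse,
and hence the weight vector, is `0` by convention. -/
noncomputable def stageWeights (A : Matrix ι ι R) (β γ : ι → R) : ι → R :=
  (diagonal γ * (1 + Aᵀ * diagonal γ)⁻¹) *ᵥ β

theorem stageWeights_eq_mul (A : Matrix ι ι R) (β γ : ι → R) :
    stageWeights A β γ = γ * ((1 + Aᵀ * diagonal γ)⁻¹ *ᵥ β) := by
  ext i
  rw [stageWeights, ← mulVec_mulVec, mulVec_diagonal, Pi.mul_apply]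

/-- The stages solve `(1 + Γ A) ξ = Γ (s - b)`, whose matrix is the transpose of the one inverted in
`stageWeights`. -/
theorem dotProduct_stages_eq {A : Matrix ι ι R} {γ : ι → R}
    (hdet : IsUnit (1 + Aᵀ * diagonal γ).det) (β : ι → R) {b s u ξ : ι → R}
    (hu : u = b + A *ᵥ ξ) (hξ : ξ = γ * (s - u)) :
    β ⬝ᵥ ξ = stageWeights A β γ ⬝ᵥ (s - b) := by
  set N := 1 + Aᵀ * diagonal γ with hN
  have hsolve : N *ᵥ (N⁻¹ *ᵥ β) = β := by
    rw [mulVec_mulVec, mul_nonsing_inv _ hdet, one_mulVec]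
  have hstages : Nᵀ *ᵥ ξ = γ * (s - b) := by
    have hNξ : Nᵀ *ᵥ ξ = ξ + γ * (A *ᵥ ξ) := by
      ext i
      simp [hN, add_mulVec, ← mulVec_mulVec, mulVec_diagonal]
    have hAξ : A *ᵥ ξ = u - b := by rw [hu, add_sub_cancel_left]
    rw [hNξ, hAξ]
    nth_rewrite 1 [hξ]
    ring
  calc β ⬝ᵥ ξ = (N *ᵥ (N⁻¹ *ᵥ β)) ⬝ᵥ ξ := by rw [hsolve]
    _ = (N⁻¹ *ᵥ β) ⬝ᵥ (γ * (s - b)) := by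
      rw [← hstages, dotProduct_mulVec, vecMul_transpose]
    _ = stageWeights A β γ ⬝ᵥ (s - b) := by
      rw [stageWeights_eq_mul]
      exact Finset.sum_congr rfl fun i _ ↦ by simp only [Pi.mul_apply]; ring

end StageWeights

section SmallSteps

variable {κ ι : Type*} [Fintype ι] [DecidableEq ι] {l : Filter κ} {γ : κ → ι → ℝ}

theorem tendsto_one_add_mul_diagonal (B : Matrix ι ι ℝ) (hγ : Tendsto γ l (𝓝 0)) :
    Tendsto (fun k ↦ 1 + B * diagonal (γ k)) l (𝓝 1) := by
  have hcont : Continuous fun g : ι → ℝ ↦ 1 + B * diagonal g := by fun_prop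
  simpa [Function.comp_def] using (hcont.tendsto 0).comp hγ

theorem eventually_isUnit_det_one_add_mul_diagonal (B : Matrix ι ι ℝ) (hγ : Tendsto γ l (𝓝 0)) :
    ∀ᶠ k in l, IsUnit (1 + B * diagonal (γ k)).det := by
  have hdet : Tendsto (fun k ↦ (1 + B * diagonal (γ k)).det) l (𝓝 1) := by
    simpa [Function.comp_def] using ((continuous_id.matrix_det (R := ℝ)).tendsto 1).comp
      (tendsto_one_add_mul_diagonal B hγ)
  exact (hdet.eventually_ne one_ne_zero).mono fun _ ↦ IsUnit.mk0 _

theorem tendsto_smul_stageWeights (A : Matrix ι ι ℝ) (β : ι → ℝ) {a : κ → ℝ} {c : ι → ℝ}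
    (hγ : Tendsto γ l (𝓝 0)) (haγ : Tendsto (fun k ↦ a k • γ k) l (𝓝 c)) :
    Tendsto (fun k ↦ a k • stageWeights A β (γ k)) l (𝓝 (c * β)) := by
  have hinv : ContinuousAt Inv.inv (1 : Matrix ι ι ℝ) :=
    continuousAt_matrix_inv 1 (by simp)
  have hmulVec : Continuous fun M : Matrix ι ι ℝ ↦ M *ᵥ β := by fun_prop
  have hsolve : Tendsto (fun k ↦ (1 + Aᵀ * diagonal (γ k))⁻¹ *ᵥ β) l (𝓝 β) := by
    simpa [Function.comp_def] using (hmulVec.tendsto _).comp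
      (hinv.tendsto.comp (tendsto_one_add_mul_diagonal Aᵀ hγ))
  simpa only [stageWeights_eq_mul, smul_mul_assoc] using haγ.mul hsolve

end SmallSteps

section ToyStep

open scoped Matrix.Norms.Operator

variable {ι : Type*} [Fintype ι] {A : Matrix ι ι ℝ} {γ : ι → ℝ}

theorem norm_stage_sub_le {b s u ξ : ι → ℝ} (hu : u = b + A *ᵥ ξ) (hξ : ξ = γ * (s - u))
    (hsmall : ‖A‖ * ‖γ‖ ≤ 1 / 2) : ‖u - b‖ ≤ 2 * (‖A‖ * ‖γ‖) * ‖s - b‖ := by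
  have hub : u - b = A *ᵥ ξ := by rw [hu, add_sub_cancel_left]
  have hsu : ‖s - u‖ ≤ ‖s - b‖ + ‖u - b‖ := by
    rw [← sub_sub_sub_cancel_right s u b]
    exact norm_sub_le _ _
  have himplicit : ‖u - b‖ ≤ ‖A‖ * ‖γ‖ * (‖s - b‖ + ‖u - b‖) :=
    calc ‖u - b‖ ≤ ‖A‖ * ‖ξ‖ := hub ▸ linfty_opNorm_mulVec A ξ
      _ ≤ ‖A‖ * (‖γ‖ * ‖s - u‖) := by
        gcongr
        exact hξ.symm ▸ norm_mul_le γ (s - u)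
      _ ≤ ‖A‖ * ‖γ‖ * (‖s - b‖ + ‖u - b‖) := by
        rw [mul_assoc]
        gcongr
  nlinarith [norm_nonneg (u - b)]

theorem abs_add_sum_mul_stages_le_max [DecidableEq ι] {β u ξ : ι → ℝ} {x : ℝ}
    (hu : ∀ i, u i = x + ∑ j, A i j * ξ j) (hξ : ∀ i, ξ i = γ i * (-(u i).sign - u i))
    (hdet : IsUnit (1 + Aᵀ * diagonal γ).det) (hp : ∀ i, 0 ≤ stageWeights A β γ i)
    (hp1 : ∑ i, stageWeights A β γ i ≤ 1) (hsmall : ‖A‖ * ‖γ‖ ≤ 1 / 4) :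
    |x + ∑ i, β i * ξ i| ≤ max (4 * (‖A‖ * ‖γ‖) + ∑ i, stageWeights A β γ i)
      (|x| - ∑ i, stageWeights A β γ i) := by
  set s : ι → ℝ := fun i ↦ -(u i).sign
  set b : ι → ℝ := fun _ ↦ x
  have hub : u = b + A *ᵥ ξ := funext hu
  have hξs : ξ = γ * (s - u) := funext hξ
  have hsb : ‖s - b‖ ≤ 1 + |x| :=
    (pi_norm_le_iff_of_nonneg (by positivity)).2 fun i ↦ by
      refine (norm_sub_le _ _).trans ?_
      simpa [s, b] using abs_realSign_le_one (u i)
  have hstage (i : ι) : |u i - x| ≤ 2 * (‖A‖ * ‖γ‖) * (1 + |x|) :=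
    calc |u i - x| ≤ ‖u - b‖ := norm_le_pi_norm (u - b) i
      _ ≤ 2 * (‖A‖ * ‖γ‖) * ‖s - b‖ := norm_stage_sub_le hub hξs (by linarith)
      _ ≤ 2 * (‖A‖ * ‖γ‖) * (1 + |x|) := by gcongr
  have hstep := abs_add_dotProduct_neg_sign_sub_le_max hp hp1 (by positivity) (by linarith) hstage
  rw [show ∑ i, β i * ξ i = _ from dotProduct_stages_eq hdet β hub hξs]
  exact hstep.trans (max_le_max_right _ (by linarith))

end ToyStep

section Rate

variable {ι : Type*} [Fintype ι] [DecidableEq ι]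

open scoped Matrix.Norms.Operator

theorem tendsto_mul_sum_stageWeights (A : Matrix ι ι ℝ) (β : ι → ℝ) {γ : ℕ → ι → ℝ} {c : ι → ℝ}
    (hγ : Tendsto (fun k : ℕ ↦ (k : ℝ) • γ k) atTop (𝓝 c)) :
    Tendsto (fun k : ℕ ↦ k * ∑ i, stageWeights A β (γ k) i) atTop (𝓝 (c ⬝ᵥ β)) := by
  have h := tendsto_smul_stageWeights A β (tendsto_zero_of_tendsto_natCast_smul hγ) hγ
  simpa [Finset.mul_sum, dotProduct] using
    tendsto_finsetSum Finset.univ fun i _ ↦ (tendsto_pi_nhds.1 h) i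

theorem rk_toy_upper_bound_general (A : Matrix ι ι ℝ) {β c : ι → ℝ} (hcβ : 0 < c ⬝ᵥ β)
    {γ : ℕ → ι → ℝ} (hγ : Tendsto (fun k : ℕ ↦ (k : ℝ) • γ k) atTop (𝓝 c))
    {x : ℕ → ℝ} {ξ xbar : ℕ → ι → ℝ}
    (hxbar : ∀ᶠ k in atTop, ∀ i, xbar k i = x k + ∑ j, A i j * ξ k j)
    (hξ : ∀ᶠ k in atTop, ∀ i, ξ k i = γ k i * (-(xbar k i).sign - xbar k i))
    (hstep : ∀ᶠ k in atTop, x (k + 1) = x k + ∑ i, β i * ξ k i)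
    (hp : ∀ᶠ k in atTop, ∀ i, 0 ≤ stageWeights A β (γ k) i) :
    ∃ C : ℝ, 0 < C ∧ ∀ᶠ k : ℕ in atTop, |x k| ≤ C / k := by
  set σ := c ⬝ᵥ β
  set C := 4 * (‖A‖ * (‖c‖ + 1)) + 2 * σ
  have hC : 0 < C := by positivity
  refine ⟨2 * C, by positivity, eventually_le_two_mul_div_of_le_max hC (half_pos hcβ) ?_⟩
  have hγ0 := tendsto_zero_of_tendsto_natCast_smul hγ
  have hS := tendsto_mul_sum_stageWeights A β hγ
  have hAγ : Tendsto (fun k ↦ ‖A‖ * ‖γ k‖) atTop (𝓝 0) := by simpa using hγ0.norm.const_mul ‖A‖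
  filter_upwards [hxbar, hξ, hstep, hp, eventually_isUnit_det_one_add_mul_diagonal Aᵀ hγ0,
    hAγ.eventually_le_const (by norm_num : (0 : ℝ) < 1 / 4),
    hγ.norm.eventually_le_const (lt_add_one ‖c‖),
    hS.eventually_const_le (half_lt_self hcβ),
    hS.eventually_le_const (by linarith : σ < 2 * σ),
    tendsto_natCast_atTop_atTop.eventually_ge_atTop (2 * σ), eventually_gt_atTop 0]
    with k hxbar hξ hstep hp hdet hsmall hγk hSlo hShi hkσ hk
  have hk0 : (0 : ℝ) < k := by exact_mod_cast hk
  set S := ∑ i, stageWeights A β (γ k) i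
  have hγle : ‖γ k‖ ≤ (‖c‖ + 1) / k := by
    rw [le_div_iff₀' hk0]
    simpa [norm_smul] using hγk
  have hSle : S ≤ 2 * σ / k := (le_div_iff₀' hk0).2 hShi
  have hS1 : S ≤ 1 := hSle.trans ((div_le_one hk0).2 hkσ)
  have hleS : σ / 2 / k ≤ S := (div_le_iff₀' hk0).2 hSlo
  rw [hstep]
  refine (abs_add_sum_mul_stages_le_max hxbar hξ hdet hp hS1 hsmall).trans
    (max_le_max ?_ (by linarith))
  calc 4 * (‖A‖ * ‖γ k‖) + S ≤ 4 * (‖A‖ * ((‖c‖ + 1) / k)) + 2 * σ / k := by gcongr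
    _ = C / k := by ring

end Rate

/-- Upper bound for the scalar toy Runge–Kutta Frank–Wolfe iteration:
if `0 < q(P^{(k)}β)_i < 1` for all `i` and all `k ≥ 1`, then there are `C₂ > 0` and `k̃`
such that `|x^{(k)}| ≤ C₂/k` for all `k ≥ k̃`. -/
theorem rk_toy_upper_bound
    (q : ℕ) (A : Matrix (Fin q) (Fin q) ℝ) (hA : ∀ i j : Fin q, i ≤ j → A i j = 0)
    (β : Fin q → ℝ) (hβ : ∑ i, β i = 1)
    (ω : Fin q → ℝ) (hω : ∀ i, 0 ≤ ω i)
    (c : ℝ) (hc : 1 ≤ c)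
    (x : ℕ → ℝ) (ξ : ℕ → Fin q → ℝ) (xbar : ℕ → Fin q → ℝ)
    (hx0 : x 0 = 1)
    (hxbar : ∀ k : ℕ, 1 ≤ k → ∀ i : Fin q, xbar k i = x k + ∑ j, A i j * ξ k j)
    (hξ : ∀ k : ℕ, 1 ≤ k → ∀ i : Fin q,
      ξ k i = (c / (c + k + ω i)) * (-(xbar k i).sign - xbar k i))
    (hstep : ∀ k : ℕ, 1 ≤ k → x (k + 1) = x k + ∑ i, β i * ξ k i)
    (hP : ∀ k : ℕ, 1 ≤ k → ∀ i : Fin q,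
      0 < (q : ℝ) * ((Matrix.diagonal (fun i => c / (c + k + ω i)) *
            (1 + Aᵀ * Matrix.diagonal (fun i => c / (c + k + ω i)))⁻¹).mulVec β i) ∧
      (q : ℝ) * ((Matrix.diagonal (fun i => c / (c + k + ω i)) *
            (1 + Aᵀ * Matrix.diagonal (fun i => c / (c + k + ω i)))⁻¹).mulVec β i) < 1) :
    ∃ C₂ : ℝ, 0 < C₂ ∧ ∃ ktilde : ℕ, ∀ k : ℕ, ktilde ≤ k → |x k| ≤ C₂ / k := by
  simpa only [eventually_atTop] using rk_toy_upper_bound_general A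
    (by simpa [dotProduct, ← Finset.mul_sum, hβ] using one_pos.trans_le hc)
    (tendsto_natCast_smul_div_add_natCast_add c ω) (eventually_atTop.2 ⟨1, hxbar⟩)
    (eventually_atTop.2 ⟨1, hξ⟩) (eventually_atTop.2 ⟨1, hstep⟩)
    (eventually_atTop.2 ⟨1, fun k hk i ↦ (pos_of_mul_pos_right (hP k hk i).1 q.cast_nonneg).le⟩)
end
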